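/- Let A be a real m×n matrix satisfying the RIP of order 2k with constant δ_{2k} < 1. Let y = A α₀ + e with ‖e‖₂ ≤ ε and ‖α₀‖₀ ≤ k. Then any vector α̂ with ‖α̂‖₀ ≤ k (in particular any minimizer of ‖α‖₀ subject to ‖y − Aα‖₂ ≤ ε) satisfying ‖y − A α̂‖₂ ≤ ε obeys ‖α₀ − α̂‖₂ ≤ 2ε / √(1 − δ_{2k}). -/

import Mathlib

/-- ℓ₀ "norm": the number of nonzero entries of a vector. -/
noncomputable def l0norm {n : ℕ} (α : Fin n → ℝ) : ℕ :=
  (Finset.univ.filter fun i => α i ≠ 0).card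

/-- Euclidean (ℓ₂) norm of a vector. -/
noncomputable def norm2 {n : ℕ} (x : Fin n → ℝ) : ℝ :=
  Real.sqrt (∑ i, x i ^ 2)

/-! Both `α₀` and `αhat` have residual at most `ε`, so `‖A (α₀ - αhat)‖ ≤ 2ε`. Their difference is
`2k`-sparse, and on such vectors the lower RIP inequality makes `A` expand norms by at least the
factor `√(1 - δ)`. -/

section Sparse

variable {ι : Type*} {β : ι → Type*} [Fintype ι] [∀ i, DecidableEq (β i)]

lemma hammingNorm_sub_le_add [∀ i, AddGroup (β i)] (x z : ∀ i, β i) :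
    hammingNorm (x - z) ≤ hammingNorm x + hammingNorm z := by
  calc hammingNorm (x - z) = hammingDist x z := by
        simp only [hammingNorm, hammingDist, Pi.sub_apply, sub_ne_zero]
    _ ≤ hammingDist x 0 + hammingDist 0 z := hammingDist_triangle x 0 z
    _ = hammingNorm x + hammingNorm z := by
        rw [hammingDist_zero_right, hammingDist_zero_left]

variable {p : ENNReal} [∀ i, SeminormedAddCommGroup (β i)]
  {F : Type*} [SeminormedAddCommGroup F]

/-- `A` is bounded below by `c` on `s`-sparse vectors. For `p = 2` and `c = √(1 - δ)` this is the
lower half of the restricted isometry property of order `s` with constant `δ`. Sparsity counts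
nonzero blocks, which are the entries when every `β i` is the scalar field. -/
def IsBoundedBelowOnSparse (A : PiLp p β → F) (s : ℕ) (c : ℝ) : Prop :=
  ∀ x : PiLp p β, hammingNorm x.ofLp ≤ s → c * ‖x‖ ≤ ‖A x‖

lemma isBoundedBelowOnSparse_sqrt [Fact (1 ≤ p)] {A : PiLp p β → F} {s : ℕ} {c : ℝ}
    (hA : ∀ x : PiLp p β, hammingNorm x.ofLp ≤ s → c * ‖x‖ ^ 2 ≤ ‖A x‖ ^ 2) :
    IsBoundedBelowOnSparse A s √c := fun x hx ↦
  calc √c * ‖x‖ = √(c * ‖x‖ ^ 2) := by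
        rw [Real.sqrt_mul' c (sq_nonneg _), Real.sqrt_sq (norm_nonneg x)]
    _ ≤ ‖A x‖ := Real.sqrt_le_iff.mpr ⟨norm_nonneg _, hA x hx⟩

theorem rip_l0_stability_general {𝓐 : Type*} [FunLike 𝓐 (PiLp p β) F]
    [AddMonoidHomClass 𝓐 (PiLp p β) F] {A : 𝓐} {s t : ℕ} {c ε η : ℝ} (hc : 0 < c)
    (hA : IsBoundedBelowOnSparse A (s + t) c) {x z : PiLp p β} {y : F}
    (hx : hammingNorm x.ofLp ≤ s) (hz : hammingNorm z.ofLp ≤ t)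
    (hxy : ‖y - A x‖ ≤ ε) (hzy : ‖y - A z‖ ≤ η) :
    ‖x - z‖ ≤ (ε + η) / c := by
  have hsparse : hammingNorm (x - z).ofLp ≤ s + t :=
    (hammingNorm_sub_le_add x.ofLp z.ofLp).trans (add_le_add hx hz)
  rw [le_div_iff₀' hc]
  calc c * ‖x - z‖ ≤ ‖A (x - z)‖ := hA _ hsparse
    _ = ‖(y - A z) - (y - A x)‖ := by rw [map_sub, sub_sub_sub_cancel_left]
    _ ≤ ‖y - A z‖ + ‖y - A x‖ := norm_sub_le _ _
    _ ≤ ε + η := by linarith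

end Sparse

section Coordinates

variable {m n : ℕ}

lemma l0norm_eq_hammingNorm (α : Fin n → ℝ) : l0norm α = hammingNorm α := by
  simp only [l0norm, hammingNorm]

lemma norm2_eq_norm_toLp (x : Fin n → ℝ) : norm2 x = ‖WithLp.toLp 2 x‖ := by
  simp only [norm2, EuclideanSpace.norm_eq, Real.norm_eq_abs, sq_abs]

lemma isBoundedBelowOnSparse_toLpLin {A : Matrix (Fin m) (Fin n) ℝ} {s : ℕ} {c : ℝ}
    (hA : ∀ α, l0norm α ≤ s → c * norm2 α ^ 2 ≤ norm2 (A.mulVec α) ^ 2) :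
    IsBoundedBelowOnSparse (Matrix.toLpLin 2 2 A) s √c := by
  simp only [norm2_eq_norm_toLp, l0norm_eq_hammingNorm] at hA
  exact isBoundedBelowOnSparse_sqrt fun x ↦ hA x.ofLp

end Coordinates

/-- Stability of ℓ₀-recovery under the RIP: if `A` satisfies the RIP of order `2k`
with constant `δ < 1`, `y = Aα₀ + e` with `‖e‖₂ ≤ ε` and `‖α₀‖₀ ≤ k`, then any
`αhat` with `‖αhat‖₀ ≤ k` and `‖y − Aαhat‖₂ ≤ ε` satisfies
`‖α₀ − αhat‖₂ ≤ 2ε/√(1 − δ)`. -/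
theorem rip_l0_stability
    {m n : ℕ} (A : Matrix (Fin m) (Fin n) ℝ) (k : ℕ) (δ ε : ℝ)
    (hδ0 : 0 ≤ δ) (hδ1 : δ < 1)
    (hRIP : ∀ α : Fin n → ℝ, l0norm α ≤ 2 * k →
      (1 - δ) * (norm2 α) ^ 2 ≤ (norm2 (A.mulVec α)) ^ 2 ∧
      (norm2 (A.mulVec α)) ^ 2 ≤ (1 + δ) * (norm2 α) ^ 2)
    (α₀ : Fin n → ℝ) (e : Fin m → ℝ) (hα₀ : l0norm α₀ ≤ k) (he : norm2 e ≤ ε)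
    (y : Fin m → ℝ) (hy : y = A.mulVec α₀ + e)
    (αhat : Fin n → ℝ) (hαh : l0norm αhat ≤ k) (hfeas : norm2 (y - A.mulVec αhat) ≤ ε) :
    norm2 (α₀ - αhat) ≤ 2 * ε / Real.sqrt (1 - δ) := by
  have hA := isBoundedBelowOnSparse_toLpLin (s := k + k) fun α hα ↦
    (hRIP α (by rwa [two_mul])).1
  have hres : norm2 (y - A.mulVec α₀) ≤ ε := by rwa [hy, add_sub_cancel_left]
  simp only [l0norm_eq_hammingNorm, norm2_eq_norm_toLp, two_mul] at hα₀ hαh hres hfeas ⊢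
  exact rip_l0_stability_general (Real.sqrt_pos.mpr (sub_pos.mpr hδ1)) hA hα₀ hαh hres hfeas
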